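/- For the Newtonian three-body problem in ℝ⁴ with any masses m₁, m₂, m₃ > 0, there exists a nonempty open set U ⊆ (ℝ⁴)³ × (ℝ⁴)³ of initial positions (with pairwise distinct position components) and velocities such that every solution of Newton's equations with initial data in U extends to all of ℝ and has uniformly bounded dynamics: for every twice differentiable curve (r₁, r₂, r₃) : I → (ℝ⁴)³ on a maximal interval I ∋ 0 solving m_i r̈_i(t) = Σ_{j≠i} m_i m_j (r_j(t) − r_i(t))/‖r_j(t) − r_i(t)‖³ for i = 1,2,3 and with (r₁(0), r₂(0), r₃(0), ṙ₁(0), ṙ₂(0), ṙ₃(0)) ∈ U, one has I = ℝ, inf over t ∈ ℝ of the minimum of the mutual distances ‖r_i(t) − r_j(t)‖ (i ≠ j) is positive, and sup over t ∈ ℝ of the maximum of the mutual distances ‖r_i(t) − r_j(t)‖ is finite. In particular U contains no initial condition whose orbit is unbounded in the mutual distances. -/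

import Mathlib

noncomputable section

/-- Configuration space: positions in `ℝ⁴`. -/
abbrev E4 := EuclideanSpace ℝ (Fin 4)

/-- `r` solves Newton's equations of the three-body problem in `ℝ⁴` with masses `m`
on the set `I`: positions are pairwise distinct and
`m_i r̈_i = Σ_{j≠i} m_i m_j (r_j − r_i)/‖r_j − r_i‖³`. -/
def SolvesOn (m : Fin 3 → ℝ) (r : Fin 3 → ℝ → E4) (I : Set ℝ) : Prop :=
  ∀ t ∈ I, (∀ i j, i ≠ j → r i t ≠ r j t) ∧
    ∀ i, HasDerivAt (r i) (deriv (r i) t) t ∧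
      HasDerivAt (deriv (r i))
        ((m i)⁻¹ • ∑ j ∈ Finset.univ.erase i,
          (m i * m j / ‖r j t - r i t‖ ^ 3) • (r j t - r i t)) t

/-! The angular momentum about the centre of mass is a skew-symmetric operator. For two relative
degrees of freedom it has rank at most four, so in `ℝ⁴` it can be invertible, say with
`ℓ * ‖x‖ ≤ ‖L x‖` for all `x`. Testing this on a vector orthogonal to the position and velocity of
one body relative to the other two shows that every pair `i, j` satisfies
`ℓ ≤ μ * ‖r i - r j‖ * ‖v i - v j‖` with `μ` its reduced mass. Hence each pair has at least the
ground state energy of its Kepler problem at angular momentum `ℓ`. If the total energy is below all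
three ground state energies, no body can escape, since a distant body would leave a pair with too
little energy; and the centrifugal barrier of the closest pair rules out collisions. These
conditions are open and conserved, and they hold for a circular binary with a distant third body
moving in the orthogonal plane. -/

open Set Metric InnerProductSpace
open scoped NNReal

section Wedge

variable {E : Type*} [NormedAddCommGroup E] [InnerProductSpace ℝ E]

/-- The skew-symmetric operator `x ↦ ⟪v, x⟫ r - ⟪r, x⟫ v` attached to the bivector `r ∧ v`, as a
continuous bilinear function of `r` and `v`. Bivectors play the role of the cross product in
arbitrary dimension. -/
def wedge : E →L[ℝ] E →L[ℝ] E →L[ℝ] E :=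
  let outer : E →L[ℝ] E →L[ℝ] E →L[ℝ] E := rankOne ℝ
  outer - outer.flip

lemma wedge_apply (r v x : E) : wedge r v x = inner ℝ v x • r - inner ℝ r x • v := rfl

lemma wedge_self (r : E) : wedge r r = 0 := sub_self _

lemma norm_wedge_apply_le (r v x : E) : ‖wedge r v x‖ ≤ ‖r‖ * ‖v‖ * ‖x‖ := by
  have gram_nonneg := (Matrix.posSemidef_gram ℝ ![r, v, x]).det_nonneg
  have norm_sq : ‖wedge r v x‖ ^ 2 = inner ℝ v x ^ 2 * ‖r‖ ^ 2
      - 2 * (inner ℝ v x * inner ℝ r x * inner ℝ r v) + inner ℝ r x ^ 2 * ‖v‖ ^ 2 := by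
    rw [wedge_apply, norm_sub_sq_real, norm_smul, norm_smul, mul_pow, mul_pow,
      inner_smul_left, inner_smul_right, Real.norm_eq_abs, Real.norm_eq_abs, sq_abs, sq_abs]
    simp only [conj_trivial]
    ring
  simp only [Matrix.det_fin_three, Matrix.gram_apply, Matrix.cons_val,
    real_inner_self_eq_norm_sq, real_inner_comm r v, real_inner_comm r x,
    real_inner_comm v x] at gram_nonneg
  refine le_of_sq_le_sq ?_ (by positivity)
  nlinarith [sq_nonneg (‖x‖ * inner ℝ r v)]

lemma hasDerivAt_wedge {r v : ℝ → E} {r' v' : E} {t : ℝ} (hr : HasDerivAt r r' t)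
    (hv : HasDerivAt v v' t) :
    HasDerivAt (fun s => wedge (r s) (v s)) (wedge (r t) v' + wedge r' (v t)) t :=
  wedge.hasDerivAt_of_bilinear (fun _ => hr) fun _ => hv

end Wedge

section Kernel

variable {E : Type*} [NormedAddCommGroup E] [InnerProductSpace ℝ E]

/-- The gravitational attraction `x / ‖x‖³` of a unit mass at position `x` on a body at the
origin; the kernel vanishes at `0` because `0⁻¹ = 0`, so a body does not act on itself. -/
def newtonKernel (x : E) : E := (‖x‖ ^ 3)⁻¹ • x

lemma newtonKernel_neg (x : E) : newtonKernel (-x) = -newtonKernel x := by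
  rw [newtonKernel, newtonKernel, norm_neg, smul_neg]

lemma norm_newtonKernel (x : E) : ‖newtonKernel x‖ = (‖x‖ ^ 2)⁻¹ := by
  rw [newtonKernel, norm_smul, norm_inv, norm_pow, norm_norm]
  field_simp

lemma norm_newtonKernel_sub_le {d : ℝ} (hd : 0 < d) {x y : E} (hx : d ≤ ‖x‖) (hy : d ≤ ‖y‖) :
    ‖newtonKernel x - newtonKernel y‖ ≤ 2 / d ^ 3 * ‖x - y‖ := by
  have x_pos : 0 < ‖x‖ := hd.trans_le hx
  have y_pos : 0 < ‖y‖ := hd.trans_le hy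
  have inversion_dist := dist_div_norm_sq_smul (norm_pos_iff.mp x_pos) (norm_pos_iff.mp y_pos) 1
  rw [dist_eq_norm, dist_eq_norm] at inversion_dist
  have split : newtonKernel x - newtonKernel y =
      ‖x‖⁻¹ • ((1 / ‖x‖) ^ 2 • x - (1 / ‖y‖) ^ 2 • y) + (‖x‖⁻¹ - ‖y‖⁻¹) • (1 / ‖y‖) ^ 2 • y := by
    simp only [newtonKernel]
    module
  have norm_diff : |‖x‖⁻¹ - ‖y‖⁻¹| ≤ (‖x‖ * ‖y‖)⁻¹ * ‖x - y‖ := by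
    rw [inv_sub_inv x_pos.ne' y_pos.ne', abs_div, abs_of_pos (mul_pos x_pos y_pos), div_eq_inv_mul]
    gcongr
    rw [abs_sub_comm]
    exact abs_norm_sub_norm_le x y
  calc ‖newtonKernel x - newtonKernel y‖
      ≤ ‖x‖⁻¹ * (1 ^ 2 / (‖x‖ * ‖y‖) * ‖x - y‖) + (‖x‖ * ‖y‖)⁻¹ * ‖x - y‖ * ‖y‖⁻¹ := by
        rw [split]
        refine (norm_add_le _ _).trans (add_le_add ?_ ?_)
        · rw [norm_smul, inversion_dist, norm_inv, norm_norm]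
        · rw [norm_smul, norm_smul]
          gcongr
          · exact norm_diff
          · simp [field]
    _ = (‖x‖⁻¹ * (‖x‖⁻¹ * ‖y‖⁻¹) + ‖x‖⁻¹ * ‖y‖⁻¹ * ‖y‖⁻¹) * ‖x - y‖ := by field_simp
    _ ≤ (d⁻¹ * (d⁻¹ * d⁻¹) + d⁻¹ * d⁻¹ * d⁻¹) * ‖x - y‖ := by gcongr
    _ = 2 / d ^ 3 * ‖x - y‖ := by field_simp; ring

lemma hasDerivAt_inv_norm {r : ℝ → E} {r' : E} {t : ℝ} (hr : HasDerivAt r r' t) (h0 : r t ≠ 0) :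
    HasDerivAt (fun s => ‖r s‖⁻¹) (-inner ℝ (newtonKernel (r t)) r') t := by
  have hp : 0 < ‖r t‖ := norm_pos_iff.mpr h0
  have h2 := hr.norm_sq.sqrt (by positivity)
  simp only [Real.sqrt_sq (norm_nonneg _)] at h2
  refine (h2.inv hp.ne').congr_deriv ?_
  rw [newtonKernel, real_inner_smul_left]
  field_simp

end Kernel

section Continuation

variable {F : Type*} [NormedAddCommGroup F] [NormedSpace ℝ F]

lemma exists_hasDerivWithinAt_mem_closedBall [CompleteSpace F] {f : ℝ → F → F} {tmin tmax : ℝ}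
    {t₀ : Icc tmin tmax} {z : F} {a L K : ℝ≥0} (hf : IsPicardLindelof f t₀ z a 0 L K) :
    ∃ α : ℝ → F, α t₀ = z ∧ ∀ t ∈ Icc tmin tmax,
      HasDerivWithinAt α (f t (α t)) (Icc tmin tmax) t ∧ α t ∈ closedBall z a := by
  obtain ⟨α, hα⟩ := ODE.FunSpace.exists_isFixedPt_next hf (mem_closedBall_self le_rfl)
  refine ⟨α.compProj, ?_, fun t ht => ⟨?_, α.compProj_mem_closedBall hf.mul_max_le⟩⟩
  · rw [ODE.FunSpace.compProj_val, ← hα, ODE.FunSpace.next_apply₀]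
  · refine (ODE.hasDerivWithinAt_picard_Icc t₀.2 hf.continuousOn_uncurry
      α.continuous_compProj.continuousOn (fun _ _ => α.compProj_mem_closedBall hf.mul_max_le)
      z ht).congr_of_mem (fun s hs => ?_) ht
    nth_rw 1 [← hα]
    rw [ODE.FunSpace.compProj_of_mem hs, ODE.FunSpace.next_apply]

variable {f : F → F} {S T : Set F} {K C : ℝ≥0} {ε τ : ℝ}

lemma exists_hasDerivAt_Ioo [CompleteSpace F] (hlip : LipschitzOnWith K f T)
    (hbound : ∀ z ∈ T, ‖f z‖ ≤ C) (hτ : 0 < τ) (hCτ : C * τ ≤ ε) {z : F}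
    (hball : closedBall z ε ⊆ T) (t₀ : ℝ) :
    ∃ α : ℝ → F, α t₀ = z ∧
      ∀ t ∈ Ioo (t₀ - τ) (t₀ + τ), HasDerivAt α (f (α t)) t ∧ α t ∈ T := by
  have ε_nonneg : 0 ≤ ε := (mul_nonneg C.coe_nonneg hτ.le).trans hCτ
  have ht₀ : t₀ ∈ Icc (t₀ - τ) (t₀ + τ) := by rw [← Real.closedBall_eq_Icc]; simp [hτ.le]
  have picard : IsPicardLindelof (fun _ => f) (⟨t₀, ht₀⟩ : Icc (t₀ - τ) (t₀ + τ)) z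
      ⟨ε, ε_nonneg⟩ 0 C K := by
    refine .of_time_independent (fun x hx => hbound x (hball hx)) (hlip.mono hball) ?_
    change (C : ℝ) * max (t₀ + τ - t₀) (t₀ - (t₀ - τ)) ≤ ε - 0
    simpa using hCτ
  obtain ⟨α, hα₀, hα⟩ := exists_hasDerivWithinAt_mem_closedBall picard
  refine ⟨α, hα₀, fun t ht => ?_⟩
  obtain ⟨deriv, mem_ball⟩ := hα t (Ioo_subset_Icc_self ht)
  exact ⟨deriv.hasDerivAt (Icc_mem_nhds ht.1 ht.2), hball mem_ball⟩

lemma exists_Ioo_subset_of_mem_of_mem {J : Set ℝ} (hJ : IsOpen J) (hJc : J.OrdConnected) {s t : ℝ}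
    (hs : s ∈ J) (ht : t ∈ J) : ∃ a b, s ∈ Ioo a b ∧ t ∈ Ioo a b ∧ Ioo a b ⊆ J := by
  wlog hst : s ≤ t generalizing s t
  · obtain ⟨a, b, ht', hs', hab⟩ := this ht hs (le_of_not_ge hst)
    exact ⟨a, b, hs', ht', hab⟩
  obtain ⟨a, a', hsa, ha⟩ := mem_nhds_iff_exists_Ioo_subset.mp (hJ.mem_nhds hs)
  obtain ⟨b', b, htb, hb⟩ := mem_nhds_iff_exists_Ioo_subset.mp (hJ.mem_nhds ht)
  refine ⟨a, b, ⟨hsa.1, hst.trans_lt htb.2⟩, ⟨hsa.1.trans_le hst, htb.2⟩, fun u hu => ?_⟩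
  rcases le_total u s with hus | hsu
  · exact ha ⟨hu.1, hus.trans_lt hsa.2⟩
  · rcases le_total u t with hut | htu
    · exact hJc.out hs ht ⟨hsu, hut⟩
    · exact hb ⟨htb.1.trans_le htu, hu.2⟩

lemma eqOn_of_hasDerivAt (hlip : LipschitzOnWith K f T) {J : Set ℝ} (hJ : IsOpen J)
    (hJc : J.OrdConnected) {α β : ℝ → F} (hα : ∀ t ∈ J, HasDerivAt α (f (α t)) t ∧ α t ∈ T)
    (hβ : ∀ t ∈ J, HasDerivAt β (f (β t)) t ∧ β t ∈ T) {t₀ : ℝ} (ht₀ : t₀ ∈ J)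
    (heq : α t₀ = β t₀) : EqOn α β J := by
  intro t ht
  obtain ⟨a, b, ht₀', ht', hab⟩ := exists_Ioo_subset_of_mem_of_mem hJ hJc ht₀ ht
  exact ODE_solution_unique_of_mem_Ioo (v := fun _ => f) (s := fun _ => T) (fun _ _ => hlip) ht₀'
    (fun u hu => hα u (hab hu)) (fun u hu => hβ u (hab hu)) heq ht'

lemma exists_hasDerivAt_extension [CompleteSpace F] (hlip : LipschitzOnWith K f T)
    (hbound : ∀ z ∈ T, ‖f z‖ ≤ C) (hτ : 0 < τ) (hCτ : C * τ ≤ ε)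
    (hball : ∀ z ∈ S, closedBall z ε ⊆ T) {I : Set ℝ} (hI : IsOpen I) (hIc : I.OrdConnected)
    {γ : ℝ → F} (hγ : ∀ t ∈ I, HasDerivAt γ (f (γ t)) t) (hγS : ∀ t ∈ I, γ t ∈ S)
    {t₀ : ℝ} (ht₀ : t₀ ∈ I) :
    ∃ β : ℝ → F, EqOn β γ I ∧
      ∀ t ∈ I ∪ Ioo (t₀ - τ) (t₀ + τ), HasDerivAt β (f (β t)) t ∧ β t ∈ T := by
  classical
  obtain ⟨α, hα₀, hα⟩ := exists_hasDerivAt_Ioo hlip hbound hτ hCτ (hball _ (hγS t₀ ht₀)) t₀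
  have ε_nonneg : 0 ≤ ε := (mul_nonneg C.coe_nonneg hτ.le).trans hCτ
  have hγT (t : ℝ) (ht : t ∈ I) : HasDerivAt γ (f (γ t)) t ∧ γ t ∈ T :=
    ⟨hγ t ht, hball _ (hγS t ht) (mem_closedBall_self ε_nonneg)⟩
  have agree : EqOn α γ (I ∩ Ioo (t₀ - τ) (t₀ + τ)) :=
    eqOn_of_hasDerivAt hlip (hI.inter isOpen_Ioo) (hIc.inter ordConnected_Ioo)
      (fun t ht => hα t ht.2) (fun t ht => hγT t ht.1)
      ⟨ht₀, by linarith, by linarith⟩ hα₀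
  have eq_γ : EqOn (I.piecewise γ α) γ I := I.piecewise_eqOn γ α
  have eq_α : EqOn (I.piecewise γ α) α (Ioo (t₀ - τ) (t₀ + τ)) := by
    intro t ht
    by_cases htI : t ∈ I
    · rw [eq_γ htI, agree ⟨htI, ht⟩]
    · exact piecewise_eq_of_notMem I γ α htI
  have transfer {δ : ℝ → F} {J : Set ℝ} (hJ : IsOpen J) (hδ : EqOn (I.piecewise γ α) δ J)
      (h : ∀ t ∈ J, HasDerivAt δ (f (δ t)) t ∧ δ t ∈ T) (t : ℝ) (ht : t ∈ J) :
      HasDerivAt (I.piecewise γ α) (f (I.piecewise γ α t)) t ∧ I.piecewise γ α t ∈ T := by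
    rw [hδ ht]
    exact ⟨(h t ht).1.congr_of_eventuallyEq (hδ.eventuallyEq_of_mem (hJ.mem_nhds ht)), (h t ht).2⟩
  exact ⟨I.piecewise γ α, eq_γ, fun t ht =>
    ht.elim (transfer hI eq_γ hγT t) (transfer isOpen_Ioo eq_α hα t)⟩

lemma eq_univ_of_forall_Ioo_subset {I : Set ℝ} (hI : IsOpen I) (hne : I.Nonempty) (hτ : 0 < τ)
    (hstep : ∀ t ∈ I, Ioo (t - τ) (t + τ) ⊆ I) : I = univ := by
  refine IsClopen.eq_univ ⟨closure_subset_iff_isClosed.mp fun t ht => ?_, hI⟩ hne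
  obtain ⟨s, hs, hts⟩ := mem_closure_iff.mp ht τ hτ
  rw [← mem_ball, Real.ball_eq_Ioo] at hts
  exact hstep s hs hts

end Continuation

namespace NBody

variable {ι E : Type*} [Fintype ι] [NormedAddCommGroup E] [InnerProductSpace ℝ E]

section Definitions

/-- The acceleration of body `i` in the configuration `q` of bodies of masses `m`, in units with
gravitational constant `1`. -/
def acceleration (m : ι → ℝ) (q : ι → E) (i : ι) : E := ∑ j, m j • newtonKernel (q j - q i)

/-- Newton's equations as a first-order vector field on pairs (positions, velocities). -/
def newtonField (m : ι → ℝ) (z : (ι → E) × (ι → E)) : (ι → E) × (ι → E) :=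
  (z.2, acceleration m z.1)

/-- The kinetic energy of the velocities `v`. -/
def kineticEnergy (m : ι → ℝ) (v : ι → E) : ℝ := (∑ i, m i * ‖v i‖ ^ 2) / 2

/-- The Newtonian force function `∑_{i < j} m i * m j / ‖q i - q j‖`, i.e. the negative of the
potential energy. It is written as half of a sum over ordered pairs, whose diagonal terms vanish
since `x / 0 = 0`. -/
def forceFunction (m : ι → ℝ) (q : ι → E) : ℝ := (∑ i, ∑ j, m i * m j / ‖q i - q j‖) / 2

/-- The total energy of the phase point `z = (positions, velocities)`. -/
def energy (m : ι → ℝ) (z : (ι → E) × (ι → E)) : ℝ := kineticEnergy m z.2 - forceFunction m z.1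

/-- The angular momentum about the centre of mass, as a skew-symmetric operator. -/
def angularMomentum (m : ι → ℝ) (z : (ι → E) × (ι → E)) : E →L[ℝ] E :=
  ∑ i, m i • wedge (z.1 i) (z.2 i) -
    (∑ i, m i)⁻¹ • wedge (∑ i, m i • z.1 i) (∑ i, m i • z.2 i)

end Definitions

section ConservationLaws

variable {m : ι → ℝ}

lemma sum_sum_eq_zero_of_antisymm {G : Type*} [AddCommGroup G] [Module ℝ G]
    {f : ι → ι → G} (hf : ∀ i j, f j i = -f i j) : ∑ i, ∑ j, f i j = 0 := by
  have := IsAddTorsionFree.of_isTorsionFree ℝ G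
  refine self_eq_neg.mp ?_
  calc ∑ i, ∑ j, f i j = ∑ i, ∑ j, f j i := Finset.sum_comm
    _ = -∑ i, ∑ j, f i j := by
      simp_rw [← Finset.sum_neg_distrib]
      exact Finset.sum_congr rfl fun i _ => Finset.sum_congr rfl fun j _ => hf i j

lemma newtonKernel_sub_comm (x y : E) : newtonKernel (x - y) = -newtonKernel (y - x) := by
  rw [← newtonKernel_neg, neg_sub]

lemma sum_smul_acceleration (m : ι → ℝ) (q : ι → E) : ∑ i, m i • acceleration m q i = 0 := by
  simp only [acceleration, Finset.smul_sum]
  refine sum_sum_eq_zero_of_antisymm fun i j => ?_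
  rw [newtonKernel_sub_comm]
  module

lemma sum_smul_wedge_acceleration (m : ι → ℝ) (q : ι → E) :
    ∑ i, m i • wedge (q i) (acceleration m q i) = 0 := by
  simp only [acceleration, map_sum, Finset.smul_sum, map_smul]
  refine sum_sum_eq_zero_of_antisymm fun i j => ?_
  have central : wedge (q j - q i) (newtonKernel (q j - q i)) = 0 := by
    rw [newtonKernel, map_smul, wedge_self, smul_zero]
  rw [map_sub, sub_apply, sub_eq_zero] at central
  rw [newtonKernel_sub_comm, map_neg, central]
  module

variable {γ : ℝ → (ι → E) × (ι → E)} {t : ℝ}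

lemma hasDerivAt_position (hγ : HasDerivAt γ (newtonField m (γ t)) t) (i : ι) :
    HasDerivAt (fun s => (γ s).1 i) ((γ t).2 i) t :=
  hasDerivAt_pi.mp hγ.fst i

lemma hasDerivAt_velocity (hγ : HasDerivAt γ (newtonField m (γ t)) t) (i : ι) :
    HasDerivAt (fun s => (γ s).2 i) (acceleration m (γ t).1 i) t :=
  hasDerivAt_pi.mp hγ.snd i

lemma hasDerivAt_angularMomentum (hγ : HasDerivAt γ (newtonField m (γ t)) t) :
    HasDerivAt (fun s => angularMomentum m (γ s)) 0 t := by
  have position := hasDerivAt_position hγ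
  have velocity := hasDerivAt_velocity hγ
  have torque : HasDerivAt (fun s => ∑ i, m i • wedge ((γ s).1 i) ((γ s).2 i)) 0 t := by
    refine (HasDerivAt.fun_sum fun i _ =>
      (hasDerivAt_wedge (position i) (velocity i)).const_smul (m i)).congr_deriv ?_
    simp only [wedge_self, add_zero, sum_smul_wedge_acceleration]
  have centre :=
    HasDerivAt.fun_sum fun i (_ : i ∈ Finset.univ) => (position i).fun_const_smul (m i)
  have momentum :=
    HasDerivAt.fun_sum fun i (_ : i ∈ Finset.univ) => (velocity i).fun_const_smul (m i)
  rw [sum_smul_acceleration] at momentum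
  unfold angularMomentum
  have about_centre := (hasDerivAt_wedge centre momentum).const_smul (∑ i, m i)⁻¹
  refine (torque.fun_sub about_centre).congr_deriv ?_
  rw [map_zero, wedge_self, zero_add, smul_zero, sub_zero]

lemma hasDerivAt_kineticEnergy (hγ : HasDerivAt γ (newtonField m (γ t)) t) :
    HasDerivAt (fun s => kineticEnergy m (γ s).2)
      (∑ i, m i * inner ℝ (acceleration m (γ t).1 i) ((γ t).2 i)) t := by
  refine ((HasDerivAt.fun_sum fun i (_ : i ∈ Finset.univ) =>
    (hasDerivAt_velocity hγ i).norm_sq.const_mul (m i)).div_const 2).congr_deriv ?_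
  rw [Finset.sum_div]
  refine Finset.sum_congr rfl fun i _ => ?_
  rw [real_inner_comm]
  ring

lemma hasDerivAt_forceFunction (hγ : HasDerivAt γ (newtonField m (γ t)) t)
    (hinj : Function.Injective (γ t).1) :
    HasDerivAt (fun s => forceFunction m (γ s).1)
      ((∑ i, ∑ j, m i * m j *
        -inner ℝ (newtonKernel ((γ t).1 i - (γ t).1 j)) ((γ t).2 i - (γ t).2 j)) / 2) t := by
  refine HasDerivAt.div_const (HasDerivAt.fun_sum fun i _ => HasDerivAt.fun_sum fun j _ => ?_) 2
  simp only [div_eq_mul_inv]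
  refine HasDerivAt.const_mul _ ?_
  obtain rfl | hij := eq_or_ne i j
  · simpa using hasDerivAt_const t (0 : ℝ)
  · exact hasDerivAt_inv_norm ((hasDerivAt_position hγ i).sub (hasDerivAt_position hγ j))
      (sub_ne_zero.mpr (hinj.ne hij))

lemma hasDerivAt_energy (hγ : HasDerivAt γ (newtonField m (γ t)) t)
    (hinj : Function.Injective (γ t).1) : HasDerivAt (fun s => energy m (γ s)) 0 t := by
  refine ((hasDerivAt_kineticEnergy hγ).sub (hasDerivAt_forceFunction hγ hinj)).congr_deriv ?_
  set power : ι → ι → ℝ := fun i j =>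
    m i * m j * inner ℝ (newtonKernel ((γ t).1 j - (γ t).1 i)) ((γ t).2 i)
  have work : ∑ i, m i * inner ℝ (acceleration m (γ t).1 i) ((γ t).2 i) = ∑ i, ∑ j, power i j := by
    simp only [acceleration, sum_inner, real_inner_smul_left, Finset.mul_sum, mul_assoc, power]
  have pair (i j : ι) : m i * m j *
      -inner ℝ (newtonKernel ((γ t).1 i - (γ t).1 j)) ((γ t).2 i - (γ t).2 j) =
        power i j + power j i := by
    simp only [power, newtonKernel_sub_comm ((γ t).1 j), inner_sub_right, inner_neg_left]
    ring
  simp only [work, pair, Finset.sum_add_distrib]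
  rw [Finset.sum_comm (f := fun i j => power j i)]
  ring

variable {I : Set ℝ} {s : ℝ}

lemma angularMomentum_eq_of_mem (hI : IsOpen I) (hIc : I.OrdConnected)
    (hγ : ∀ t ∈ I, HasDerivAt γ (newtonField m (γ t)) t) (hs : s ∈ I) (ht : t ∈ I) :
    angularMomentum m (γ t) = angularMomentum m (γ s) :=
  hI.is_const_of_deriv_eq_zero hIc.isPreconnected
    (fun u hu => (hasDerivAt_angularMomentum (hγ u hu)).differentiableAt.differentiableWithinAt)
    (fun u hu => (hasDerivAt_angularMomentum (hγ u hu)).deriv) ht hs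

lemma energy_eq_of_mem (hI : IsOpen I) (hIc : I.OrdConnected)
    (hγ : ∀ t ∈ I, HasDerivAt γ (newtonField m (γ t)) t)
    (hinj : ∀ t ∈ I, Function.Injective (γ t).1) (hs : s ∈ I) (ht : t ∈ I) :
    energy m (γ t) = energy m (γ s) :=
  hI.is_const_of_deriv_eq_zero hIc.isPreconnected
    (fun u hu => (hasDerivAt_energy (hγ u hu) (hinj u hu)).differentiableAt.differentiableWithinAt)
    (fun u hu => (hasDerivAt_energy (hγ u hu) (hinj u hu)).deriv) ht hs

end ConservationLaws

section JacobiVectors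

/-- The reduced mass of two bodies of masses `a` and `b`. -/
def reducedMass (a b : ℝ) : ℝ := a * b / (a + b)

lemma reducedMass_pos {a b : ℝ} (ha : 0 < a) (hb : 0 < b) : 0 < reducedMass a b := by
  unfold reducedMass; positivity

/-- The Jacobi vector from the centre of mass of the bodies `i` and `j` to the body `k`; applied
to velocities it is the relative velocity. -/
def jacobiVector {ι G : Type*} [AddCommGroup G] [Module ℝ G] (m : ι → ℝ) (i j k : ι) (q : ι → G) :
    G :=
  q k - (m i + m j)⁻¹ • (m i • q i + m j • q j)

omit [Fintype ι] in
lemma jacobiVector_comm (m : ι → ℝ) (i j k : ι) (q : ι → E) :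
    jacobiVector m j i k q = jacobiVector m i j k q := by
  simp only [jacobiVector, add_comm]

omit [Fintype ι] in
lemma sub_eq_smul_sub_jacobiVector {m : ι → ℝ} {i j : ι} (hm : m i + m j ≠ 0) (k : ι)
    (q : ι → E) :
    q i - q k = (m j / (m i + m j)) • (q i - q j) - jacobiVector m i j k q := by
  rw [jacobiVector]
  match_scalars <;> field_simp <;> ring

omit [Fintype ι] in
lemma norm_sub_le_add_norm_jacobiVector {m : ι → ℝ} {i j : ι} (hi : 0 < m i) (hj : 0 < m j) (k : ι)
    (q : ι → E) : ‖q i - q k‖ ≤ ‖q i - q j‖ + ‖jacobiVector m i j k q‖ := by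
  rw [sub_eq_smul_sub_jacobiVector (add_pos hi hj).ne']
  refine (norm_sub_le _ _).trans ?_
  gcongr
  rw [norm_smul, Real.norm_of_nonneg (by positivity)]
  exact mul_le_of_le_one_left (norm_nonneg _) ((div_le_one (by positivity)).mpr (by linarith))

omit [Fintype ι] in
lemma ne_of_jacobiVector_ne_zero {m : ι → ℝ} {i j k : ι} {q : ι → E} (hm : m i + m j ≠ 0)
    (hR : jacobiVector m i j k q ≠ 0)
    (horth : inner ℝ (q i - q j) (jacobiVector m i j k q) = 0) : q i ≠ q k := by
  intro collision
  have parallel := sub_eq_zero.mp <|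
    (sub_eq_smul_sub_jacobiVector hm k q).symm.trans (sub_eq_zero.mpr collision)
  refine hR (inner_self_eq_zero (𝕜 := ℝ).mp ?_)
  nth_rw 1 [← parallel]
  rw [real_inner_smul_left, horth, mul_zero]

variable {m : Fin 3 → ℝ} {i j k : Fin 3}

lemma eq_or_eq_or_eq (hij : i ≠ j) (hjk : j ≠ k) (hki : k ≠ i) (l : Fin 3) :
    l = i ∨ l = j ∨ l = k := by
  lia

lemma sum_fin_three_of_ne {M : Type*} [AddCommMonoid M] (hij : i ≠ j) (hjk : j ≠ k) (hki : k ≠ i)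
    (f : Fin 3 → M) : ∑ l, f l = f i + f j + f k := by
  have univ_eq : (Finset.univ : Finset (Fin 3)) = {i, j, k} := by
    ext l
    simpa using eq_or_eq_or_eq hij hjk hki l
  rw [univ_eq, Finset.sum_insert (by simp [hij, hki.symm]), Finset.sum_pair hjk, add_assoc]

lemma jacobi_decomposition {G : Type*} [NormedAddCommGroup G] [NormedSpace ℝ G]
    (hm : ∀ i, 0 < m i) (hij : i ≠ j) (hjk : j ≠ k) (hki : k ≠ i)
    (B : E →L[ℝ] E →L[ℝ] G) (q v : Fin 3 → E) :
    ∑ l, m l • B (q l) (v l) =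
      reducedMass (m i) (m j) • B (q i - q j) (v i - v j) +
      reducedMass (m k) (m i + m j) • B (jacobiVector m i j k q) (jacobiVector m i j k v) +
      (∑ l, m l)⁻¹ • B (∑ l, m l • q l) (∑ l, m l • v l) := by
  have hi := hm i
  have hj := hm j
  have hk := hm k
  simp only [sum_fin_three_of_ne hij hjk hki, jacobiVector, reducedMass, map_add, map_sub, map_smul,
    add_apply, sub_apply, smul_apply]
  match_scalars <;> field_simp <;> ring

lemma angularMomentum_eq (hm : ∀ i, 0 < m i) (hij : i ≠ j) (hjk : j ≠ k) (hki : k ≠ i)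
    (q v : Fin 3 → E) :
    angularMomentum m (q, v) =
      reducedMass (m i) (m j) • wedge (q i - q j) (v i - v j) +
      reducedMass (m k) (m i + m j) •
        wedge (jacobiVector m i j k q) (jacobiVector m i j k v) := by
  rw [angularMomentum, jacobi_decomposition hm hij hjk hki, add_sub_cancel_right]

lemma kineticEnergy_eq (hm : ∀ i, 0 < m i) (hij : i ≠ j) (hjk : j ≠ k) (hki : k ≠ i)
    (v : Fin 3 → E) :
    kineticEnergy m v = (reducedMass (m i) (m j) * ‖v i - v j‖ ^ 2 +
      reducedMass (m k) (m i + m j) * ‖jacobiVector m i j k v‖ ^ 2 +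
      (∑ l, m l)⁻¹ * ‖∑ l, m l • v l‖ ^ 2) / 2 := by
  have decomposition := jacobi_decomposition hm hij hjk hki (innerSL ℝ : E →L[ℝ] E →L[ℝ] ℝ) v v
  have inner_self (x : E) : (innerSL ℝ : E →L[ℝ] E →L[ℝ] ℝ) x x = ‖x‖ ^ 2 :=
    real_inner_self_eq_norm_sq x
  simp only [inner_self, smul_eq_mul] at decomposition
  rw [kineticEnergy, decomposition]

omit [InnerProductSpace ℝ E] in
lemma forceFunction_eq (hij : i ≠ j) (hjk : j ≠ k) (hki : k ≠ i) (q : Fin 3 → E) :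
    forceFunction m q = m i * m j / ‖q i - q j‖ + m j * m k / ‖q j - q k‖ +
      m k * m i / ‖q k - q i‖ := by
  simp only [forceFunction, sum_fin_three_of_ne hij hjk hki, sub_self, norm_zero, div_zero,
    norm_sub_rev (q j) (q i), norm_sub_rev (q k) (q j), norm_sub_rev (q i) (q k)]
  ring

end JacobiVectors

section KeplerPairs

/-- The ground state energy of the Kepler problem with reduced mass `μ` and potential `-κ / r` at
angular momentum `ℓ`, attained on the circular orbits. -/
def keplerGroundEnergy (μ κ ℓ : ℝ) : ℝ := -(μ * κ ^ 2) / (2 * ℓ ^ 2)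

lemma keplerGroundEnergy_le {μ κ ℓ d w : ℝ} (hμ : 0 < μ) (hℓ : 0 < ℓ) (hd : 0 < d)
    (h : ℓ ≤ μ * (d * w)) : keplerGroundEnergy μ κ ℓ ≤ μ * w ^ 2 / 2 - κ / d := by
  have centrifugal : ℓ ^ 2 / (2 * μ * d ^ 2) ≤ μ * w ^ 2 / 2 := by
    rw [div_le_iff₀ (by positivity)]
    calc ℓ ^ 2 ≤ (μ * (d * w)) ^ 2 := pow_le_pow_left₀ hℓ.le h 2
      _ = μ * w ^ 2 / 2 * (2 * μ * d ^ 2) := by ring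
  have complete_square : ℓ ^ 2 / (2 * μ * d ^ 2) - κ / d - keplerGroundEnergy μ κ ℓ =
      (ℓ / d - μ * κ / ℓ) ^ 2 / (2 * μ) := by
    rw [keplerGroundEnergy]
    field_simp
    ring
  have square_nonneg : 0 ≤ (ℓ / d - μ * κ / ℓ) ^ 2 / (2 * μ) := by positivity
  linarith

/-- The ground state energy of the Kepler problem formed by the bodies `i` and `j` alone, at
angular momentum `ℓ`. -/
def pairGroundEnergy (m : ι → ℝ) (ℓ : ℝ) (i j : ι) : ℝ :=
  keplerGroundEnergy (reducedMass (m i) (m j)) (m i * m j) ℓ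

omit [Fintype ι] in
lemma pairGroundEnergy_nonpos {m : ι → ℝ} (hm : ∀ i, 0 < m i) (ℓ : ℝ) (i j : ι) :
    pairGroundEnergy m ℓ i j ≤ 0 := by
  have := reducedMass_pos (hm i) (hm j)
  exact div_nonpos_of_nonpos_of_nonneg (neg_nonpos.mpr (by positivity)) (by positivity)

omit [Fintype ι] in
lemma pairGroundEnergy_eq_div (m : ι → ℝ) (ℓ : ℝ) (i j : ι) :
    pairGroundEnergy m ℓ i j = pairGroundEnergy m 1 i j / ℓ ^ 2 := by
  simp only [pairGroundEnergy, keplerGroundEnergy]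
  field_simp

omit [Fintype ι] in
lemma continuousAt_pairGroundEnergy (m : ι → ℝ) {ℓ : ℝ} (hℓ : ℓ ≠ 0) (i j : ι) :
    ContinuousAt (fun ℓ => pairGroundEnergy m ℓ i j) ℓ := by
  unfold pairGroundEnergy keplerGroundEnergy
  exact continuousAt_const.div (by fun_prop) (by positivity)

lemma exists_ne_zero_inner_eq_zero (hE : 2 < Module.finrank ℝ E) (u v : E) :
    ∃ x ≠ 0, inner ℝ u x = 0 ∧ inner ℝ v x = 0 := by
  have : FiniteDimensional ℝ E := Module.finite_of_finrank_pos (by lia)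
  have span_finrank : Module.finrank ℝ (Submodule.span ℝ {u, v}) ≤ 2 := by
    classical
    have card_le := finrank_span_finset_le_card (R := ℝ) ({u, v} : Finset E)
    rw [Finset.coe_pair] at card_le
    exact card_le.trans Finset.card_le_two
  have finrank_add := (Submodule.span ℝ {u, v}).finrank_add_finrank_orthogonal
  have ne_bot : (Submodule.span ℝ {u, v})ᗮ ≠ ⊥ := by
    rw [← Submodule.one_le_finrank_iff]
    lia
  obtain ⟨x, hx, x_ne⟩ := Submodule.exists_mem_ne_zero_of_ne_bot ne_bot
  exact ⟨x, x_ne, hx u (Submodule.subset_span (by simp)), hx v (Submodule.subset_span (by simp))⟩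

lemma exists_third {i j : Fin 3} (hij : i ≠ j) : ∃ k, j ≠ k ∧ k ≠ i := by
  decide +revert

variable {m : Fin 3 → ℝ} {ℓ : ℝ} {q v : Fin 3 → E} {i j k : Fin 3}

-- A vector orthogonal to the Jacobi vectors of the third body only sees the angular momentum of
-- the pair.
lemma le_reducedMass_mul_norm_mul_norm (hE : 2 < Module.finrank ℝ E) (hm : ∀ i, 0 < m i)
    (hL : ∀ x, ℓ * ‖x‖ ≤ ‖angularMomentum m (q, v) x‖) (hij : i ≠ j) :
    ℓ ≤ reducedMass (m i) (m j) * (‖q i - q j‖ * ‖v i - v j‖) := by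
  obtain ⟨k, hjk, hki⟩ := exists_third hij
  obtain ⟨x, x_ne, hqx, hvx⟩ :=
    exists_ne_zero_inner_eq_zero hE (jacobiVector m i j k q) (jacobiVector m i j k v)
  have pair_only : angularMomentum m (q, v) x =
      reducedMass (m i) (m j) • wedge (q i - q j) (v i - v j) x := by
    rw [angularMomentum_eq hm hij hjk hki, add_apply, smul_apply, smul_apply,
      wedge_apply (jacobiVector m i j k q), hqx, hvx, zero_smul, zero_smul, sub_zero, smul_zero,
      add_zero]
  have reducedMass_nonneg := (reducedMass_pos (hm i) (hm j)).le
  refine le_of_mul_le_mul_right ?_ (norm_pos_iff.mpr x_ne)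
  calc ℓ * ‖x‖ ≤ reducedMass (m i) (m j) * ‖wedge (q i - q j) (v i - v j) x‖ := by
        simpa only [pair_only, norm_smul, Real.norm_of_nonneg reducedMass_nonneg] using hL x
    _ ≤ reducedMass (m i) (m j) * (‖q i - q j‖ * ‖v i - v j‖ * ‖x‖) := by
        gcongr
        exact norm_wedge_apply_le _ _ _
    _ = reducedMass (m i) (m j) * (‖q i - q j‖ * ‖v i - v j‖) * ‖x‖ := by ring

lemma reducedMass_mul_norm_sq_le_kineticEnergy (hm : ∀ i, 0 < m i) (hij : i ≠ j) (v : Fin 3 → E) :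
    reducedMass (m i) (m j) * ‖v i - v j‖ ^ 2 / 2 ≤ kineticEnergy m v := by
  obtain ⟨k, hjk, hki⟩ := exists_third hij
  have := reducedMass_pos (hm k) (add_pos (hm i) (hm j))
  have := Finset.sum_nonneg fun l (_ : l ∈ Finset.univ) => (hm l).le
  rw [kineticEnergy_eq hm hij hjk hki, add_assoc]
  gcongr
  exact le_add_of_nonneg_right (by positivity)

lemma pairGroundEnergy_le_energy_add (hE : 2 < Module.finrank ℝ E) (hm : ∀ i, 0 < m i)
    (hℓ : 0 < ℓ) (hL : ∀ x, ℓ * ‖x‖ ≤ ‖angularMomentum m (q, v) x‖) (hq : q i ≠ q j)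
    (hij : i ≠ j) (hjk : j ≠ k) (hki : k ≠ i) :
    pairGroundEnergy m ℓ i j ≤
      energy m (q, v) + (m j * m k / ‖q j - q k‖ + m k * m i / ‖q k - q i‖) := by
  have ground := keplerGroundEnergy_le (κ := m i * m j) (reducedMass_pos (hm i) (hm j)) hℓ
    (norm_pos_iff.mpr (sub_ne_zero.mpr hq)) (le_reducedMass_mul_norm_mul_norm hE hm hL hij)
  have kinetic := reducedMass_mul_norm_sq_le_kineticEnergy hm hij v
  rw [energy, forceFunction_eq hij hjk hki, pairGroundEnergy]
  linarith

end KeplerPairs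

section DistanceBounds

/-- The configurations all of whose mutual distances are at least `d`. -/
def separated (ι E : Type*) [NormedAddCommGroup E] (d : ℝ) : Set (ι → E) :=
  {q | ∀ i j, i ≠ j → d ≤ ‖q i - q j‖}

omit [InnerProductSpace ℝ E] in
lemma forceFunction_le {m : ι → ℝ} (hm : ∀ i, 0 ≤ m i) {d : ℝ} (hd : 0 < d) {q : ι → E}
    (hq : q ∈ separated ι E d) : forceFunction m q ≤ (∑ i, m i) ^ 2 / (2 * d) := by
  have pair_le (i j : ι) : m i * m j / ‖q i - q j‖ ≤ m i * m j / d := by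
    have product_nonneg := mul_nonneg (hm i) (hm j)
    obtain rfl | hij := eq_or_ne i j
    · simpa using div_nonneg product_nonneg hd.le
    · exact div_le_div_of_nonneg_left product_nonneg hd (hq i j hij)
  calc forceFunction m q ≤ (∑ i, ∑ j, m i * m j / d) / 2 := by
        unfold forceFunction
        exact div_le_div_of_nonneg_right (Finset.sum_le_sum fun i _ =>
          Finset.sum_le_sum fun j _ => pair_le i j) two_pos.le
    _ = (∑ i, m i) ^ 2 / (2 * d) := by
        rw [sq, Finset.sum_mul_sum]
        simp only [Finset.sum_div]
        field_simp

omit [InnerProductSpace ℝ E] in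
lemma norm_velocity_le {m : ι → ℝ} (hm : ∀ i, 0 < m i) {d : ℝ} (hd : 0 < d) {q v : ι → E}
    (hq : q ∈ separated ι E d) (henergy : energy m (q, v) ≤ 0) :
    ‖v‖ ≤ ∑ i, √((∑ j, m j) ^ 2 / (d * m i)) := by
  have kinetic_le : kineticEnergy m v ≤ (∑ j, m j) ^ 2 / (2 * d) :=
    (sub_nonpos.mp henergy).trans (forceFunction_le (fun i => (hm i).le) hd hq)
  have body_le (i : ι) : ‖v i‖ ≤ √((∑ j, m j) ^ 2 / (d * m i)) := by
    have hi := hm i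
    have summand_le : m i * ‖v i‖ ^ 2 ≤ ∑ j, m j * ‖v j‖ ^ 2 :=
      Finset.single_le_sum (f := fun j => m j * ‖v j‖ ^ 2)
        (fun j _ => mul_nonneg (hm j).le (sq_nonneg _)) (Finset.mem_univ i)
    refine Real.le_sqrt_of_sq_le ?_
    rw [le_div_iff₀ (by positivity)]
    rw [kineticEnergy, le_div_iff₀ (by positivity)] at kinetic_le
    nlinarith
  exact (pi_norm_le_iff_of_nonneg (Finset.sum_nonneg fun i _ => Real.sqrt_nonneg _)).mpr fun i =>
    (body_le i).trans <| Finset.single_le_sum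
      (f := fun i => √((∑ j, m j) ^ 2 / (d * m i))) (fun i _ => Real.sqrt_nonneg _)
      (Finset.mem_univ i)

omit [Fintype ι] [InnerProductSpace ℝ E] in
lemma exists_closest_pair [Finite ι] [Nontrivial ι] (q : ι → E) :
    ∃ i j, i ≠ j ∧ q ∈ separated ι E ‖q i - q j‖ := by
  classical
  have := Fintype.ofFinite ι
  obtain ⟨a, b, hab⟩ := exists_pair_ne ι
  obtain ⟨p, hp, closest⟩ := Finset.exists_min_image (Finset.univ : Finset ι).offDiag
    (fun p => ‖q p.1 - q p.2‖) ⟨(a, b), by simp [hab]⟩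
  exact ⟨p.1, p.2, (Finset.mem_offDiag.mp hp).2.2, fun a b hab => closest (a, b) (by simp [hab])⟩

lemma mass_le_sum {m : ι → ℝ} (hm : ∀ i, 0 < m i) (i : ι) : m i ≤ ∑ l, m l :=
  Finset.single_le_sum (fun l _ => (hm l).le) (Finset.mem_univ i)

lemma reducedMass_le_sum {m : ι → ℝ} (hm : ∀ i, 0 < m i) (i j : ι) :
    reducedMass (m i) (m j) ≤ ∑ l, m l := by
  have hi := hm i
  have hj := hm j
  refine le_trans ?_ (mass_le_sum hm i)
  rw [reducedMass, div_le_iff₀ (by positivity)]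
  nlinarith

variable {m : Fin 3 → ℝ} {ℓ g : ℝ} {q v : Fin 3 → E} {i j : Fin 3}

-- The closest pair carries at least the centrifugal energy `ℓ² / (2 μ d²)`, which for small `d`
-- exceeds the total attraction, at most of order `1 / d`.
lemma mem_separated_of_energy_nonpos (hE : 2 < Module.finrank ℝ E) (hm : ∀ i, 0 < m i)
    (hℓ : 0 < ℓ) (hL : ∀ x, ℓ * ‖x‖ ≤ ‖angularMomentum m (q, v) x‖)
    (hq : Function.Injective q) (henergy : energy m (q, v) ≤ 0) :
    q ∈ separated (Fin 3) E (ℓ ^ 2 / (∑ l, m l) ^ 3) := by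
  obtain ⟨i, j, hij, closest⟩ := exists_closest_pair q
  set d := ‖q i - q j‖
  set w := ‖v i - v j‖
  set μ := reducedMass (m i) (m j)
  set M := ∑ l, m l
  have μ_pos : 0 < μ := reducedMass_pos (hm i) (hm j)
  have μ_le : μ ≤ M := reducedMass_le_sum hm i j
  have M_pos : 0 < M := μ_pos.trans_le μ_le
  have d_pos : 0 < d := norm_pos_iff.mpr (sub_ne_zero.mpr (hq.ne hij))
  have momentum_le : ℓ ≤ μ * (d * w) := le_reducedMass_mul_norm_mul_norm hE hm hL hij
  have kinetic_le : μ * w ^ 2 / 2 ≤ M ^ 2 / (2 * d) :=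
    (reducedMass_mul_norm_sq_le_kineticEnergy hm hij v).trans <|
      (sub_nonpos.mp henergy).trans (forceFunction_le (fun l => (hm l).le) d_pos closest)
  have sq_le : ℓ ^ 2 ≤ d * M ^ 3 := calc
    ℓ ^ 2 ≤ (μ * (d * w)) ^ 2 := pow_le_pow_left₀ hℓ.le momentum_le 2
    _ = 2 * μ * d ^ 2 * (μ * w ^ 2 / 2) := by ring
    _ ≤ 2 * μ * d ^ 2 * (M ^ 2 / (2 * d)) := by gcongr
    _ = d * (μ * M ^ 2) := by field_simp
    _ ≤ d * (M * M ^ 2) := by gcongr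
    _ = d * M ^ 3 := by ring
  exact fun a b hab => ((div_le_iff₀ (by positivity)).mpr sq_le).trans (closest a b hab)

lemma le_or_le_of_le_div_add_div {a b x y g : ℝ} (hg : 0 < g) (hx : 0 < x) (hy : 0 < y)
    (h : g ≤ a / x + b / y) : x ≤ 2 * a / g ∨ y ≤ 2 * b / g := by
  by_contra! far
  rw [div_lt_iff₀ hg, div_lt_iff₀ hg] at far
  have hx' : a / x < g / 2 := by rw [div_lt_div_iff₀ hx two_pos]; linarith
  have hy' : b / y < g / 2 := by rw [div_lt_div_iff₀ hy two_pos]; linarith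
  linarith

lemma norm_sub_le_of_energy_add_le (hE : 2 < Module.finrank ℝ E) (hm : ∀ i, 0 < m i)
    (hℓ : 0 < ℓ) (hL : ∀ x, ℓ * ‖x‖ ≤ ‖angularMomentum m (q, v) x‖) (hq : Function.Injective q)
    (hg : 0 < g) (hgap : ∀ i j, i ≠ j → energy m (q, v) + g ≤ pairGroundEnergy m ℓ i j)
    (i j : Fin 3) : ‖q i - q j‖ ≤ 2 * (2 * (∑ l, m l) ^ 2 / g) := by
  set D := 2 * (∑ l, m l) ^ 2 / g
  have D_nonneg : 0 ≤ D := by positivity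
  have le_D (i j : Fin 3) : 2 * (m i * m j) / g ≤ D := by
    have sum_nonneg := (hm i).le.trans (mass_le_sum hm i)
    simp only [D, sq]
    gcongr
    exacts [(hm j).le, mass_le_sum hm i, mass_le_sum hm j]
  have dist_pos {i j : Fin 3} (hij : i ≠ j) : 0 < ‖q i - q j‖ :=
    norm_pos_iff.mpr (sub_ne_zero.mpr (hq.ne hij))
  have near (i j k : Fin 3) (hij : i ≠ j) (hjk : j ≠ k) (hki : k ≠ i) :
      ‖q j - q k‖ ≤ D ∨ ‖q k - q i‖ ≤ D := by
    have ground := pairGroundEnergy_le_energy_add hE hm hℓ hL (hq.ne hij) hij hjk hki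
    exact (le_or_le_of_le_div_add_div hg (dist_pos hjk) (dist_pos hki)
      (by linarith [hgap i j hij])).imp (le_D j k).trans' (le_D k i).trans'
  obtain rfl | hij := eq_or_ne i j
  · simpa using D_nonneg
  obtain ⟨k, hjk, hki⟩ := exists_third hij
  rcases near j k i hjk hki hij with hki_le | hij_le
  · rcases near k i j hki hij hjk with hij_le | hjk_le
    · linarith
    · have triangle := norm_sub_le_norm_sub_add_norm_sub (q i) (q k) (q j)
      rw [norm_sub_rev (q i) (q k), norm_sub_rev (q k) (q j)] at triangle
      linarith
  · linarith

end DistanceBounds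

section FieldEstimates

/-- The phase points with mutual distances at least `d` and velocities of norm at most `V`. -/
def tameRegion (ι E : Type*) [Fintype ι] [NormedAddCommGroup E] (d V : ℝ) :
    Set ((ι → E) × (ι → E)) :=
  {z | z.1 ∈ separated ι E d ∧ ‖z.2‖ ≤ V}

omit [InnerProductSpace ℝ E] in
lemma closedBall_subset_tameRegion {d V : ℝ} {z : (ι → E) × (ι → E)} (hz : z ∈ tameRegion ι E d V)
    (ε : ℝ) : closedBall z ε ⊆ tameRegion ι E (d - 2 * ε) (V + ε) := by
  intro w hw
  rw [← closedBall_prod_same, mem_prod, mem_closedBall_iff_norm', mem_closedBall_iff_norm'] at hw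
  obtain ⟨position_close, velocity_close⟩ := hw
  refine ⟨fun i j hij => ?_, ?_⟩
  · have triangle : ‖z.1 i - z.1 j‖ ≤ ‖z.1 i - w.1 i‖ + ‖w.1 i - w.1 j‖ + ‖z.1 j - w.1 j‖ := by
      rw [norm_sub_rev (z.1 j)]
      calc ‖z.1 i - z.1 j‖ = ‖(z.1 i - w.1 i) + (w.1 i - w.1 j) + (w.1 j - z.1 j)‖ := by abel_nf
        _ ≤ _ := norm_add₃_le
    have body_close (l : ι) : ‖z.1 l - w.1 l‖ ≤ ε :=
      (norm_le_pi_norm (z.1 - w.1) l).trans position_close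
    linarith [hz.1 i j hij, body_close i, body_close j]
  · linarith [hz.2, norm_le_norm_add_norm_sub z.2 w.2]

variable {d : ℝ} {q q' : ι → E}

omit [Fintype ι] [InnerProductSpace ℝ E] in
lemma injective_of_mem_separated (hd : 0 < d) (hq : q ∈ separated ι E d) :
    Function.Injective q := by
  intro i j hij
  by_contra hne
  exact hd.not_ge (by simpa [hij] using hq i j hne)

lemma norm_acceleration_le (m : ι → ℝ) (hd : 0 < d) (hq : q ∈ separated ι E d) :
    ‖acceleration m q‖ ≤ ∑ j, ‖m j‖ * (d ^ 2)⁻¹ := by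
  refine (pi_norm_le_iff_of_nonneg (by positivity)).mpr fun i => norm_sum_le_of_le _ fun j _ => ?_
  rw [norm_smul, norm_newtonKernel]
  gcongr ?_ * ?_
  obtain rfl | hij := eq_or_ne j i
  · simpa using sq_nonneg d
  · exact inv_anti₀ (by positivity) (pow_le_pow_left₀ hd.le (hq j i hij) 2)

lemma norm_acceleration_sub_le (m : ι → ℝ) (hd : 0 < d) (hq : q ∈ separated ι E d)
    (hq' : q' ∈ separated ι E d) :
    ‖acceleration m q - acceleration m q'‖ ≤ (∑ j, ‖m j‖ * (4 / d ^ 3)) * ‖q - q'‖ := by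
  have kernel_le (i j : ι) : ‖newtonKernel (q j - q i) - newtonKernel (q' j - q' i)‖ ≤
      4 / d ^ 3 * ‖q - q'‖ := by
    obtain rfl | hij := eq_or_ne j i
    · simp only [sub_self, norm_zero]
      positivity
    have relative_le : ‖q j - q i - (q' j - q' i)‖ ≤ 2 * ‖q - q'‖ := by
      rw [sub_sub_sub_comm, two_mul]
      exact (norm_sub_le _ _).trans
        (add_le_add (norm_le_pi_norm (q - q') j) (norm_le_pi_norm (q - q') i))
    calc _ ≤ 2 / d ^ 3 * ‖q j - q i - (q' j - q' i)‖ :=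
          norm_newtonKernel_sub_le hd (hq j i hij) (hq' j i hij)
      _ ≤ 2 / d ^ 3 * (2 * ‖q - q'‖) := by gcongr
      _ = 4 / d ^ 3 * ‖q - q'‖ := by ring
  refine (pi_norm_le_iff_of_nonneg (by positivity)).mpr fun i => ?_
  simp only [Pi.sub_apply, acceleration, ← Finset.sum_sub_distrib, ← smul_sub, Finset.sum_mul,
    mul_assoc]
  refine norm_sum_le_of_le _ fun j _ => ?_
  rw [norm_smul]
  gcongr
  exact kernel_le i j

lemma exists_lipschitzOnWith_newtonField (m : ι → ℝ) (hd : 0 < d) (V : ℝ) :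
    ∃ K, LipschitzOnWith K (newtonField m) (tameRegion ι E d V) := by
  have acceleration_lipschitz :
      LipschitzOnWith (∑ j, ‖m j‖ * (4 / d ^ 3)).toNNReal (acceleration m) (separated ι E d) :=
    LipschitzOnWith.of_dist_le' fun q hq q' hq' => by
      simpa only [dist_eq_norm] using norm_acceleration_sub_le m hd hq hq'
  exact ⟨_, LipschitzWith.prod_snd.lipschitzOnWith.prodMk
    (acceleration_lipschitz.comp LipschitzWith.prod_fst.lipschitzOnWith fun z hz => hz.1)⟩

lemma exists_norm_newtonField_le (m : ι → ℝ) (hd : 0 < d) (V : ℝ) :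
    ∃ C : ℝ≥0, ∀ z ∈ tameRegion ι E d V, ‖newtonField m z‖ ≤ C :=
  ⟨(max V (∑ j, ‖m j‖ * (d ^ 2)⁻¹)).toNNReal, fun _ hz =>
    (max_le_max hz.2 (norm_acceleration_le m hd hz.1)).trans (Real.le_coe_toNNReal _)⟩

end FieldEstimates

section MaximalSolutions

/-- The motion `r` together with its velocities, as a curve in phase space. -/
def phaseCurve (r : ι → ℝ → E) (t : ℝ) : (ι → E) × (ι → E) :=
  (fun i => r i t, fun i => deriv (r i) t)

lemma inv_smul_sum_erase_eq_acceleration [DecidableEq ι] {m : ι → ℝ} {i : ι} (hm : m i ≠ 0)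
    (q : ι → E) :
    (m i)⁻¹ • ∑ j ∈ Finset.univ.erase i, (m i * m j / ‖q j - q i‖ ^ 3) • (q j - q i) =
      acceleration m q i := by
  rw [Finset.sum_erase _ (by rw [sub_self, smul_zero]), Finset.smul_sum]
  refine Finset.sum_congr rfl fun j _ => ?_
  rw [newtonKernel, smul_smul, smul_smul]
  congr 1
  field_simp

variable {m : Fin 3 → ℝ} {r : Fin 3 → ℝ → E4} {I : Set ℝ}

lemma solvesOn_iff (hm : ∀ i, m i ≠ 0) : SolvesOn m r I ↔
    ∀ t ∈ I, Function.Injective (phaseCurve r t).1 ∧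
      HasDerivAt (phaseCurve r) (newtonField m (phaseCurve r t)) t := by
  refine forall₂_congr fun t _ => and_congr ?_ ?_
  · exact ⟨fun h i j => not_imp_not.mp (h i j), fun h i j hij => h.ne hij⟩
  · simp only [fun i => inv_smul_sum_erase_eq_acceleration (hm i) fun j => r j t, forall_and]
    rw [← hasDerivAt_pi, ← hasDerivAt_pi]
    exact ⟨fun h => h.1.prodMk h.2, fun h => ⟨h.fst, h.snd⟩⟩

lemma solvesOn_of_hasDerivAt (hm : ∀ i, m i ≠ 0) (hI : IsOpen I)
    {γ : ℝ → (Fin 3 → E4) × (Fin 3 → E4)}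
    (hγ : ∀ t ∈ I, HasDerivAt γ (newtonField m (γ t)) t)
    (hinj : ∀ t ∈ I, Function.Injective (γ t).1) : SolvesOn m (fun i t => (γ t).1 i) I := by
  have eqOn : EqOn (phaseCurve fun i t => (γ t).1 i) γ I := fun t ht =>
    Prod.ext rfl (funext fun i => (hasDerivAt_position (hγ t ht) i).deriv)
  refine (solvesOn_iff hm).mpr fun t ht => ⟨hinj t ht, ?_⟩
  rw [eqOn ht]
  exact (hγ t ht).congr_of_eventuallyEq (eqOn.eventuallyEq_of_mem (hI.mem_nhds ht))

lemma eq_univ_of_phaseCurve_mem_tameRegion (hm : ∀ i, m i ≠ 0) (hI : IsOpen I)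
    (hIc : I.OrdConnected) (hne : I.Nonempty) (hr : SolvesOn m r I)
    (hmax : ∀ J : Set ℝ, IsOpen J → J.OrdConnected → I ⊆ J → ∀ r' : Fin 3 → ℝ → E4,
      SolvesOn m r' J → (∀ i, ∀ t ∈ I, r' i t = r i t) → J = I)
    {d V : ℝ} (hd : 0 < d) (htame : ∀ t ∈ I, phaseCurve r t ∈ tameRegion (Fin 3) E4 d V) :
    I = univ := by
  obtain ⟨K, hlip⟩ := exists_lipschitzOnWith_newtonField (E := E4) m (half_pos hd) (V + d / 4)
  obtain ⟨C, hbound⟩ := exists_norm_newtonField_le (E := E4) m (half_pos hd) (V + d / 4)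
  have hball (z) (hz : z ∈ tameRegion (Fin 3) E4 d V) :
      closedBall z (d / 4) ⊆ tameRegion (Fin 3) E4 (d / 2) (V + d / 4) := by
    convert closedBall_subset_tameRegion hz (d / 4) using 2
    ring
  obtain ⟨τ, hτ, hCτ⟩ : ∃ τ > 0, C * τ ≤ d / 4 :=
    ⟨d / 4 / (C + 1), by positivity, by
      rw [mul_div_left_comm]
      exact mul_le_of_le_one_right (by positivity) ((div_le_one (by positivity)).mpr (by linarith))⟩
  refine eq_univ_of_forall_Ioo_subset hI hne hτ fun t₀ ht₀ => ?_
  obtain ⟨β, hβr, hβ⟩ := exists_hasDerivAt_extension hlip hbound hτ hCτ hball hI hIc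
    (fun t ht => ((solvesOn_iff hm).mp hr t ht).2) htame ht₀
  have union_ordConnected : (I ∪ Ioo (t₀ - τ) (t₀ + τ)).OrdConnected :=
    IsPreconnected.ordConnected <|
      hIc.isPreconnected.union t₀ ht₀ ⟨by linarith, by linarith⟩ isPreconnected_Ioo
  have β_injective (t) (ht : t ∈ I ∪ Ioo (t₀ - τ) (t₀ + τ)) : Function.Injective (β t).1 :=
    injective_of_mem_separated (half_pos hd) (hβ t ht).2.1
  have extends_r (i : Fin 3) (t : ℝ) (ht : t ∈ I) : (β t).1 i = r i t := by
    rw [hβr ht, phaseCurve]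
  rw [← hmax _ (hI.union isOpen_Ioo) union_ordConnected subset_union_left _
    (solvesOn_of_hasDerivAt hm (hI.union isOpen_Ioo) (fun t ht => (hβ t ht).1) β_injective)
    extends_r]
  exact subset_union_right

end MaximalSolutions

section StableRegion

variable {m : ι → ℝ} {z : (ι → E) × (ι → E)}

/-- The phase points without collision whose energy is below `e` and whose angular momentum
operator is bounded below by a constant larger than `ℓ`. For three bodies and suitable `e`, all
orbits starting here are bounded. -/
def stableRegion (m : ι → ℝ) (ℓ e : ℝ) : Set ((ι → E) × (ι → E)) :=
  {z | Function.Injective z.1 ∧ energy m z < e ∧ ∃ c > ℓ, ∀ x, c * ‖x‖ ≤ ‖angularMomentum m z x‖}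

lemma isOpen_setOf_exists_gt_forall_mul_norm_le (ℓ : ℝ) :
    IsOpen {L : E →L[ℝ] E | ∃ c > ℓ, ∀ x, c * ‖x‖ ≤ ‖L x‖} := by
  refine Metric.isOpen_iff.mpr fun L ⟨c, hc, hL⟩ =>
    ⟨(c - ℓ) / 2, by linarith, fun L' hL' => ⟨(c + ℓ) / 2, by linarith, fun x => ?_⟩⟩
  rw [mem_ball_iff_norm'] at hL'
  have perturbation : ‖L x - L' x‖ ≤ (c - ℓ) / 2 * ‖x‖ := (L - L').le_of_opNorm_le hL'.le x
  linarith [hL x, norm_sub_norm_le (L x) (L' x)]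

omit [Fintype ι] [InnerProductSpace ℝ E] in
lemma eventually_injective [Finite ι] {q : ι → E} (hq : Function.Injective q) :
    ∀ᶠ q' in nhds q, Function.Injective q' := by
  have eventually_ne (i j : ι) (hij : i ≠ j) : ∀ᶠ q' in nhds q, q' i ≠ q' j :=
    (isOpen_ne_fun (continuous_apply i) (continuous_apply j)).mem_nhds (hq.ne hij)
  refine .mono (Filter.eventually_all.mpr fun i => Filter.eventually_all.mpr fun j =>
    Filter.eventually_imp_distrib_left.mpr (eventually_ne i j)) ?_
  exact fun q' h i j => not_imp_not.mp (h i j)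

omit [InnerProductSpace ℝ E] in
lemma continuousAt_energy (m : ι → ℝ) (hz : Function.Injective z.1) :
    ContinuousAt (energy m) z := by
  have kinetic : Continuous fun z : (ι → E) × (ι → E) => kineticEnergy m z.2 := by
    unfold kineticEnergy; fun_prop
  refine kinetic.continuousAt.sub (ContinuousAt.div_const ?_ 2)
  refine tendsto_finsetSum _ fun i _ => tendsto_finsetSum _ fun j _ => ?_
  obtain rfl | hij := eq_or_ne i j
  · simp
  · exact ContinuousAt.div (by fun_prop) (by fun_prop)
      (norm_ne_zero_iff.mpr (sub_ne_zero.mpr (hz.ne hij)))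

lemma continuous_angularMomentum (m : ι → ℝ) :
    Continuous (angularMomentum m : (ι → E) × (ι → E) → E →L[ℝ] E) := by
  unfold angularMomentum; fun_prop

lemma isOpen_stableRegion (m : ι → ℝ) (ℓ e : ℝ) :
    IsOpen (stableRegion m ℓ e : Set ((ι → E) × (ι → E))) := by
  refine isOpen_iff_mem_nhds.mpr fun z ⟨hinj, henergy, hL⟩ => ?_
  filter_upwards [continuous_fst.continuousAt.eventually (eventually_injective hinj),
    (continuousAt_energy m hinj).eventually_lt_const henergy,
    ((isOpen_setOf_exists_gt_forall_mul_norm_le ℓ).preimage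
      (continuous_angularMomentum m)).mem_nhds hL] with w hw_inj hw_energy hw_L
  exact ⟨hw_inj, hw_energy, hw_L⟩

lemma mul_norm_le_of_mem_stableRegion {ℓ e : ℝ} (hz : z ∈ stableRegion m ℓ e) (x : E) :
    ℓ * ‖x‖ ≤ ‖angularMomentum m z x‖ := by
  obtain ⟨-, -, c, hc, hL⟩ := hz
  exact (mul_le_mul_of_nonneg_right (le_of_lt hc) (norm_nonneg x)).trans (hL x)

lemma mem_stableRegion_of_mem {ℓ e : ℝ} {γ : ℝ → (ι → E) × (ι → E)} {I : Set ℝ} (hI : IsOpen I)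
    (hIc : I.OrdConnected) (hγ : ∀ t ∈ I, HasDerivAt γ (newtonField m (γ t)) t)
    (hinj : ∀ t ∈ I, Function.Injective (γ t).1) {s t : ℝ} (hs : s ∈ I) (ht : t ∈ I)
    (h : γ s ∈ stableRegion m ℓ e) : γ t ∈ stableRegion m ℓ e := by
  refine ⟨hinj t ht, ?_⟩
  rw [energy_eq_of_mem hI hIc hγ hinj hs ht, angularMomentum_eq_of_mem hI hIc hγ hs ht]
  exact h.2

end StableRegion

section BoundedOrbits

variable {m : Fin 3 → ℝ} {ℓ e : ℝ} {z : (Fin 3 → E) × (Fin 3 → E)}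

lemma exists_stableRegion_subset_tameRegion (hE : 2 < Module.finrank ℝ E) (hm : ∀ i, 0 < m i)
    (hℓ : 0 < ℓ) (he : ∀ i j, i ≠ j → e ≤ pairGroundEnergy m ℓ i j) :
    ∃ d > 0, ∃ V, stableRegion m ℓ e ⊆ tameRegion (Fin 3) E d V := by
  have mass_pos : 0 < ∑ l, m l := (hm 0).trans_le (mass_le_sum hm 0)
  have d_pos : 0 < ℓ ^ 2 / (∑ l, m l) ^ 3 := by positivity
  refine ⟨_, d_pos, ∑ i, √((∑ j, m j) ^ 2 / (ℓ ^ 2 / (∑ l, m l) ^ 3 * m i)), fun z hz => ?_⟩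
  have energy_nonpos : energy m z ≤ 0 :=
    hz.2.1.le.trans ((he 0 1 (by decide)).trans (pairGroundEnergy_nonpos hm ℓ 0 1))
  have mem_separated : z.1 ∈ separated (Fin 3) E (ℓ ^ 2 / (∑ l, m l) ^ 3) :=
    mem_separated_of_energy_nonpos hE hm hℓ (mul_norm_le_of_mem_stableRegion hz) hz.1 energy_nonpos
  exact ⟨mem_separated, norm_velocity_le hm d_pos mem_separated energy_nonpos⟩

lemma norm_sub_le_of_mem_stableRegion (hE : 2 < Module.finrank ℝ E) (hm : ∀ i, 0 < m i)
    (hℓ : 0 < ℓ) (he : ∀ i j, i ≠ j → e ≤ pairGroundEnergy m ℓ i j) (hz : z ∈ stableRegion m ℓ e)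
    (i j : Fin 3) : ‖z.1 i - z.1 j‖ ≤ 2 * (2 * (∑ l, m l) ^ 2 / (e - energy m z)) := by
  refine norm_sub_le_of_energy_add_le hE hm hℓ (mul_norm_le_of_mem_stableRegion hz) hz.1
    (sub_pos.mpr hz.2.1) (fun i j hij => ?_) i j
  rw [add_sub_cancel]
  exact he i j hij

end BoundedOrbits

section CircularBinary

lemma norm_wedge_add_wedge_apply (b : OrthonormalBasis (Fin 4) ℝ E) (x : E) :
    ‖(wedge (b 0) (b 1) + wedge (b 2) (b 3)) x‖ = ‖x‖ := by
  refine (sq_eq_sq₀ (norm_nonneg _) (norm_nonneg _)).mp ?_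
  simp only [← b.sum_sq_norm_inner_right, Fin.sum_univ_four, add_apply, wedge_apply,
    inner_add_right, inner_sub_right, inner_smul_right, b.inner_eq_ite, Real.norm_eq_abs, sq_abs]
  simp only [Fin.isValue, ↓reduceIte, mul_one, zero_ne_one, mul_zero, sub_zero, Fin.reduceEq,
    sub_self, add_zero, one_ne_zero, zero_sub, even_two, Even.neg_pow, zero_add]
  ring

variable {m : Fin 3 → ℝ} {i j k : Fin 3} {q : Fin 3 → E}

lemma exists_jacobi_coordinates (hm : ∀ i, 0 < m i) (hij : i ≠ j) (hjk : j ≠ k) (hki : k ≠ i)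
    (r R : E) :
    ∃ q : Fin 3 → E, q i - q j = r ∧ jacobiVector m i j k q = R ∧ ∑ l, m l • q l = 0 := by
  have hi := hm i
  have hj := hm j
  have hk := hm k
  set a : E := -(m k / (m i + m j + m k)) • R
  refine ⟨fun l => if l = i then a + (m j / (m i + m j)) • r else
    if l = j then a - (m i / (m i + m j)) • r else a + R, ?_, ?_, ?_⟩
  all_goals
    simp only [jacobiVector, sum_fin_three_of_ne hij hjk hki, hij.symm, hjk.symm, hki, if_true,
      if_false, a]
    match_scalars <;> field_simp <;> ring

lemma injective_of_jacobiVector_ne_zero (hm : ∀ i, 0 < m i) (hij : i ≠ j) (hjk : j ≠ k)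
    (hki : k ≠ i) (hr : q i - q j ≠ 0) (hR : jacobiVector m i j k q ≠ 0)
    (horth : inner ℝ (q i - q j) (jacobiVector m i j k q) = 0) : Function.Injective q := by
  have ne_ij : q i ≠ q j := sub_ne_zero.mp hr
  have ne_ik : q i ≠ q k := ne_of_jacobiVector_ne_zero (add_pos (hm i) (hm j)).ne' hR horth
  have ne_jk : q j ≠ q k := by
    rw [← jacobiVector_comm] at hR horth
    refine ne_of_jacobiVector_ne_zero (add_pos (hm j) (hm i)).ne' hR ?_
    rw [← neg_sub, inner_neg_left, horth, neg_zero]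
  intro a b hab
  rcases eq_or_eq_or_eq hij hjk hki a with rfl | rfl | rfl <;>
    rcases eq_or_eq_or_eq hij hjk hki b with rfl | rfl | rfl <;> simp_all [eq_comm]

variable {v : Fin 3 → E}

lemma le_outer_attraction (hm : ∀ i, 0 < m i) (hq : Function.Injective q) (hjk : j ≠ k)
    (hki : k ≠ i) {D : ℝ} (hD : ‖q i - q j‖ + ‖jacobiVector m i j k q‖ ≤ D) :
    (m i + m j) * m k / D ≤ m j * m k / ‖q j - q k‖ + m k * m i / ‖q k - q i‖ := by
  have hi := hm i
  have hj := hm j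
  have hk := hm k
  have dist_jk : ‖q j - q k‖ ≤ D := by
    refine (norm_sub_le_add_norm_jacobiVector hj hi k q).trans ?_
    rwa [jacobiVector_comm, norm_sub_rev]
  have dist_ki : ‖q k - q i‖ ≤ D := by
    rw [norm_sub_rev]
    exact (norm_sub_le_add_norm_jacobiVector hi hj k q).trans hD
  have jk_pos : 0 < ‖q j - q k‖ := norm_pos_iff.mpr (sub_ne_zero.mpr (hq.ne hjk))
  have ki_pos : 0 < ‖q k - q i‖ := norm_pos_iff.mpr (sub_ne_zero.mpr (hq.ne hki))
  calc (m i + m j) * m k / D = m j * m k / D + m k * m i / D := by ring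
    _ ≤ m j * m k / ‖q j - q k‖ + m k * m i / ‖q k - q i‖ := by gcongr

lemma norm_angularMomentum_apply (b : OrthonormalBasis (Fin 4) ℝ E) (hm : ∀ i, 0 < m i)
    (hij : i ≠ j) (hjk : j ≠ k) (hki : k ≠ i) {w R W c : ℝ} (hr : q i - q j = b 0)
    (hw : v i - v j = w • b 1) (hR : jacobiVector m i j k q = R • b 2)
    (hW : jacobiVector m i j k v = W • b 3) (hc : 0 ≤ c)
    (inner_momentum : reducedMass (m i) (m j) * w = c)
    (outer_momentum : reducedMass (m k) (m i + m j) * (R * W) = c) (x : E) :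
    ‖angularMomentum m (q, v) x‖ = c * ‖x‖ := by
  have isoclinic : angularMomentum m (q, v) = c • (wedge (b 0) (b 1) + wedge (b 2) (b 3)) := by
    rw [angularMomentum_eq hm hij hjk hki, hr, hw, hR, hW, smul_add]
    nth_rw 1 [← inner_momentum]
    rw [← outer_momentum]
    simp only [map_smul, smul_apply, smul_smul, mul_comm W]
  rw [isoclinic, smul_apply, norm_smul, Real.norm_of_nonneg hc, norm_wedge_add_wedge_apply]

lemma energy_circular_binary_le (hm : ∀ i, 0 < m i) (hq : Function.Injective q) (hij : i ≠ j)
    (hjk : j ≠ k) (hki : k ≠ i) {R : ℝ} (hr : ‖q i - q j‖ = 1)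
    (hw : ‖v i - v j‖ ^ 2 = m i + m j) (hR : ‖jacobiVector m i j k q‖ = R) (hR1 : 1 ≤ R)
    (hmom : ∑ l, m l • v l = 0) :
    energy m (q, v) ≤ -(m i * m j / 2) +
      (reducedMass (m k) (m i + m j) * ‖jacobiVector m i j k v‖ ^ 2 -
        (m i + m j) * m k / R) / 2 := by
  have pair_pos := add_pos (hm i) (hm j)
  have outer := le_outer_attraction hm hq hjk hki (D := 2 * R) (by linarith : _ + _ ≤ 2 * R)
  have virial : reducedMass (m i) (m j) * (m i + m j) = m i * m j :=
    div_mul_cancel₀ _ pair_pos.ne'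
  have halve : (m i + m j) * m k / (2 * R) = (m i + m j) * m k / R / 2 := by ring
  rw [energy, kineticEnergy_eq hm hij hjk hki, forceFunction_eq hij hjk hki, hmom, hr, hw, virial,
    norm_zero]
  linarith

lemma pairGroundEnergy_circular (hm : ∀ i, 0 < m i) (i j : Fin 3) :
    pairGroundEnergy m (reducedMass (m i) (m j) * √(m i + m j)) i j = -(m i * m j / 2) := by
  have hi := hm i
  have hj := hm j
  rw [pairGroundEnergy, keplerGroundEnergy, mul_pow _ √_, Real.sq_sqrt (by positivity), reducedMass]
  field_simp

lemma exists_mul_sq_lt_div {c ν κ : ℝ} (hν : 0 < ν) (hκ : 0 < κ) :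
    ∃ R ≥ 1, ν * (c / (ν * R)) ^ 2 < κ / R := by
  have ratio_nonneg : 0 ≤ c ^ 2 / (ν * κ) := by positivity
  refine ⟨1 + c ^ 2 / (ν * κ), le_add_of_nonneg_right ratio_nonneg, ?_⟩
  have R_gt := lt_one_add (c ^ 2 / (ν * κ))
  set R := 1 + c ^ 2 / (ν * κ)
  have R_pos : 0 < R := ratio_nonneg.trans_lt R_gt
  rw [div_lt_iff₀ (by positivity)] at R_gt
  rw [lt_div_iff₀ R_pos]
  calc ν * (c / (ν * R)) ^ 2 * R = c ^ 2 / (ν * R) := by field_simp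
    _ < κ := (div_lt_iff₀ (by positivity)).mpr (by linarith)

-- The pair `i, j` moves on the unit circle in the plane of `b 0, b 1` and has ground state energy.
-- The third body starts at distance `R` from the pair in the plane of `b 2, b 3`, with the
-- transverse velocity giving it the same angular momentum `c`; being bound by the pair once
-- `c ^ 2 / R ^ 2` is small against `1 / R`, it makes the total energy strictly lower.
lemma exists_energy_lt_pairGroundEnergy (b : OrthonormalBasis (Fin 4) ℝ E) (hm : ∀ i, 0 < m i)
    (hij : i ≠ j) :
    ∃ c > 0, ∃ z : (Fin 3 → E) × (Fin 3 → E), Function.Injective z.1 ∧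
      (∀ x, ‖angularMomentum m z x‖ = c * ‖x‖) ∧ energy m z < pairGroundEnergy m c i j := by
  obtain ⟨k, hjk, hki⟩ := exists_third hij
  have pair_pos := add_pos (hm i) (hm j)
  have outer_pos := mul_pos pair_pos (hm k)
  set c := reducedMass (m i) (m j) * √(m i + m j) with hc
  set ν := reducedMass (m k) (m i + m j)
  have ν_pos : 0 < ν := reducedMass_pos (hm k) pair_pos
  have c_pos : 0 < c := mul_pos (reducedMass_pos (hm i) (hm j)) (Real.sqrt_pos.mpr pair_pos)
  obtain ⟨R, R_ge, outer_kinetic_lt⟩ := exists_mul_sq_lt_div (c := c) ν_pos outer_pos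
  have R_pos : 0 < R := one_pos.trans_le R_ge
  obtain ⟨q, hr, hR, -⟩ := exists_jacobi_coordinates hm hij hjk hki (b 0) (R • b 2)
  obtain ⟨v, hw, hW, hmom⟩ :=
    exists_jacobi_coordinates hm hij hjk hki (√(m i + m j) • b 1) ((c / (ν * R)) • b 3)
  have hinj : Function.Injective q := by
    refine injective_of_jacobiVector_ne_zero hm hij hjk hki ?_ ?_ ?_
    · rw [hr]; exact b.orthonormal.ne_zero 0
    · rw [hR]; exact smul_ne_zero R_pos.ne' (b.orthonormal.ne_zero 2)
    · rw [hr, hR, inner_smul_right, b.inner_eq_zero (by decide), mul_zero]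
  refine ⟨c, c_pos, (q, v), hinj, norm_angularMomentum_apply b hm hij hjk hki hr hw hR hW c_pos.le
    rfl ?_, ?_⟩
  · change ν * (R * (c / (ν * R))) = c
    field_simp
  · have energy_le := energy_circular_binary_le (v := v) hm hinj hij hjk hki (R := R)
      (by rw [hr, b.norm_eq_one])
      (by rw [hw, norm_smul, b.norm_eq_one, mul_one, Real.norm_eq_abs, sq_abs,
        Real.sq_sqrt pair_pos.le])
      (by rw [hR, norm_smul, b.norm_eq_one, mul_one, Real.norm_of_nonneg R_pos.le]) R_ge hmom
    have norm_outer : ‖jacobiVector m i j k v‖ ^ 2 = (c / (ν * R)) ^ 2 := by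
      rw [hW, norm_smul, b.norm_eq_one, mul_one, Real.norm_eq_abs, sq_abs]
    rw [norm_outer] at energy_le
    rw [hc, pairGroundEnergy_circular hm]
    linarith

lemma exists_stableRegion_nonempty (b : OrthonormalBasis (Fin 4) ℝ E) (hm : ∀ i, 0 < m i) :
    ∃ ℓ > 0, ∃ e, (∀ i j, i ≠ j → e ≤ pairGroundEnergy m ℓ i j) ∧
      (stableRegion m ℓ e : Set ((Fin 3 → E) × (Fin 3 → E))).Nonempty := by
  obtain ⟨⟨i, j⟩, hp, lowest⟩ := Finset.exists_min_image (Finset.univ : Finset (Fin 3)).offDiag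
    (fun p => pairGroundEnergy m 1 p.1 p.2) ⟨(0, 1), by decide⟩
  have hij : i ≠ j := (Finset.mem_offDiag.mp hp).2.2
  obtain ⟨c, c_pos, z, hinj, hL, henergy⟩ := exists_energy_lt_pairGroundEnergy b hm hij
  have energy_lt_near : ∀ᶠ ℓ in nhds c, energy m z < pairGroundEnergy m ℓ i j :=
    (continuousAt_pairGroundEnergy m c_pos.ne' i j).eventually_const_lt henergy
  obtain ⟨ℓ, henergyℓ, hℓ, hℓc⟩ :=
    ((energy_lt_near.filter_mono nhdsWithin_le_nhds).and (Ioo_mem_nhdsLT c_pos)).exists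
  refine ⟨ℓ, hℓ, pairGroundEnergy m ℓ i j, fun i' j' hij' => ?_, z, hinj, henergyℓ,
    c, hℓc, fun x => (hL x).ge⟩
  rw [pairGroundEnergy_eq_div m ℓ i j, pairGroundEnergy_eq_div m ℓ i' j']
  exact div_le_div_of_nonneg_right (lowest (i', j') (by simp [hij'])) (sq_nonneg ℓ)

end CircularBinary

end NBody

/-- There is a nonempty open set of initial conditions (with pairwise distinct
positions) of the three-body problem in `ℝ⁴` such that every maximal solution starting
in it is global and has mutual distances bounded away from `0` and `∞`; in particular
it contains no unbounded orbits. -/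
theorem exists_open_set_of_bounded_orbits (m : Fin 3 → ℝ) (hm : ∀ i, 0 < m i) :
    ∃ U : Set ((Fin 3 → E4) × (Fin 3 → E4)),
      IsOpen U ∧ U.Nonempty ∧
      (∀ x ∈ U, ∀ i j : Fin 3, i ≠ j → x.1 i ≠ x.1 j) ∧
      ∀ (r : Fin 3 → ℝ → E4) (I : Set ℝ),
        IsOpen I → I.OrdConnected → (0 : ℝ) ∈ I →
        SolvesOn m r I →
        ((fun i => r i 0), fun i => deriv (r i) 0) ∈ U →
        -- maximality of the solution `r` on `I`
        (∀ (J : Set ℝ), IsOpen J → J.OrdConnected → I ⊆ J →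
          ∀ r' : Fin 3 → ℝ → E4, SolvesOn m r' J →
            (∀ i, ∀ t ∈ I, r' i t = r i t) → J = I) →
        I = Set.univ ∧
        (∃ δ > 0, ∀ t ∈ I, ∀ i j : Fin 3, i ≠ j → δ ≤ ‖r i t - r j t‖) ∧
        (∃ R : ℝ, ∀ t ∈ I, ∀ i j : Fin 3, ‖r i t - r j t‖ ≤ R) := by
  have finrank_gt : 2 < Module.finrank ℝ E4 := by simp
  obtain ⟨ℓ, hℓ, e, he, nonempty⟩ :=
    NBody.exists_stableRegion_nonempty (EuclideanSpace.basisFun (Fin 4) ℝ) hm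
  refine ⟨NBody.stableRegion m ℓ e, NBody.isOpen_stableRegion m ℓ e, nonempty,
    fun x hx i j hij => hx.1.ne hij, fun r I hI hIc h0 hr hU hmax => ?_⟩
  have phase := (NBody.solvesOn_iff fun i => (hm i).ne').mp hr
  have stable (t) (ht : t ∈ I) : NBody.phaseCurve r t ∈ NBody.stableRegion m ℓ e :=
    NBody.mem_stableRegion_of_mem hI hIc (fun t ht => (phase t ht).2) (fun t ht => (phase t ht).1)
      h0 ht hU
  obtain ⟨d, hd, V, tame⟩ := NBody.exists_stableRegion_subset_tameRegion finrank_gt hm hℓ he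
  refine ⟨NBody.eq_univ_of_phaseCurve_mem_tameRegion (fun i => (hm i).ne') hI hIc ⟨0, h0⟩ hr hmax hd
      fun t ht => tame (stable t ht),
    ⟨d, hd, fun t ht => (tame (stable t ht)).1⟩,
    ⟨2 * (2 * (∑ l, m l) ^ 2 / (e - NBody.energy m (NBody.phaseCurve r 0))), fun t ht i j => ?_⟩⟩
  rw [← NBody.energy_eq_of_mem hI hIc (fun t ht => (phase t ht).2) (fun t ht => (phase t ht).1)
    h0 ht]
  exact NBody.norm_sub_le_of_mem_stableRegion finrank_gt hm hℓ he (stable t ht) i j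

end
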